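/- For all integers n and k with 0 ≤ 2k ≤ n, the iterated map ds_n^{(k)} : J_n → J_{n−2k} is surjective. -/

import Mathlib

/-!
Common setup: `R n` is the ring of Laurent polynomials
`ℤ[x₁^{±1}, …, xₙ^{±1}]`, realized as the group algebra over `ℤ` of the
group `ℤ^n` of exponent vectors (`AddMonoidAlgebra ℤ (Fin n → ℤ)`).
-/

noncomputable section

/-- The ring `Rₙ = ℤ[x₁^{±1}, …, xₙ^{±1}]` of Laurent polynomials in `n` variables. -/
abbrev R (n : ℕ) : Type := AddMonoidAlgebra ℤ (Fin n → ℤ)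

/-- The variable `xᵢ` of `R n` (`i` is a `0`-based index). -/
def X {n : ℕ} (i : Fin n) : R n := AddMonoidAlgebra.single (Pi.single i (1 : ℤ)) 1

/-- The inverse `xᵢ⁻¹` of the variable `xᵢ` of `R n`. -/
def Xinv {n : ℕ} (i : Fin n) : R n := AddMonoidAlgebra.single (Pi.single i (-1 : ℤ)) 1

/-- The action of a permutation `w` on exponent vectors. -/
def permExp {n : ℕ} (w : Equiv.Perm (Fin n)) : (Fin n → ℤ) →+ (Fin n → ℤ) :=
  AddMonoidHom.mk' (fun m => m ∘ w.symm) (fun _ _ => rfl)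

/-- The action of `w ∈ Sₙ` on `R n`, permuting the variables (`xᵢ ↦ x_{w i}`). -/
def permHom {n : ℕ} (w : Equiv.Perm (Fin n)) : R n →+* R n :=
  AddMonoidAlgebra.mapDomainRingHom ℤ (permExp w)

/-- `f` is a symmetric Laurent polynomial, i.e. `f ∈ Rₙ^{Sₙ}`. -/
def SymmP {n : ℕ} (f : R n) : Prop := ∀ w : Equiv.Perm (Fin n), permHom w f = f

/-- The map of exponent groups underlying the evaluation
`xᵢ ↦ xᵢ (1 ≤ i ≤ n-2), x_{n-1} ↦ t, xₙ ↦ t⁻¹`; the second coordinate of the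
target records the exponent of `t`. -/
def evExp (n : ℕ) : (Fin n → ℤ) →+ ((Fin (n - 2) → ℤ) × ℤ) :=
  AddMonoidHom.mk'
    (fun m => (fun i => m (Fin.castLE (Nat.sub_le n 2) i),
      if h : 2 ≤ n then m ⟨n - 2, by omega⟩ - m ⟨n - 1, by omega⟩ else 0))
    (by
      intro a b
      refine Prod.ext (funext fun i => rfl) ?_
      by_cases h : 2 ≤ n
      · simp [h]; ring
      · simp [h])

/-- The evaluation homomorphism
`evₙ : ℤ[x₁^{±1},…,xₙ^{±1}] → ℤ[x₁^{±1},…,x_{n-2}^{±1}, t^{±1}]` determined by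
`xᵢ ↦ xᵢ` for `1 ≤ i ≤ n-2`, `x_{n-1} ↦ t`, `xₙ ↦ t⁻¹`.  The target is realized
as the group algebra of `ℤ^{n-2} × ℤ`, the last factor recording the exponent
of `t`. -/
def ev (n : ℕ) : R n →+* AddMonoidAlgebra ℤ ((Fin (n - 2) → ℤ) × ℤ) :=
  AddMonoidAlgebra.mapDomainRingHom ℤ (evExp n)

/-- An element of `ℤ[x₁^{±1},…,x_{n-2}^{±1}, t^{±1}]` "does not involve `t`",
i.e. it lies in the image of the subring `ℤ[x₁^{±1},…,x_{n-2}^{±1}]`. -/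
def NoT (n : ℕ) (g : AddMonoidAlgebra ℤ ((Fin (n - 2) → ℤ) × ℤ)) : Prop :=
  g ∈ Set.range
    (AddMonoidAlgebra.mapDomainRingHom ℤ (AddMonoidHom.inl (Fin (n - 2) → ℤ) ℤ))

/-- `J n`: for `n ≥ 2`, the set of symmetric Laurent polynomials `f` such that
`evₙ f` does not involve `t`; for `n = 0, 1` it is all of `Rₙ^{Sₙ}`. -/
def J (n : ℕ) : Set (R n) := {f | SymmP f ∧ (2 ≤ n → NoT n (ev n f))}

/-- Restriction of exponent vectors to the first `n - 2` coordinates. -/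
def resExp (n : ℕ) : (Fin n → ℤ) →+ (Fin (n - 2) → ℤ) :=
  AddMonoidHom.mk' (fun m i => m (Fin.castLE (Nat.sub_le n 2) i)) (fun _ _ => rfl)

/-- The ring homomorphism `R n → R (n-2)` which, on `J n`, is the
Duflo–Serganova map `dsₙ`: for `f ∈ J n` it is exactly `evₙ f` regarded as an
element of `ℤ[x₁^{±1},…,x_{n-2}^{±1}]` (the `t`-degree-`0` part of `evₙ f`). -/
def ds (n : ℕ) : R n →+* R (n - 2) :=
  AddMonoidAlgebra.mapDomainRingHom ℤ (resExp n)

/-- The product `∏_{1 ≤ i < j ≤ n} (1 - xᵢ xⱼ)`. -/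
def P (n : ℕ) : R n :=
  ∏ p ∈ Finset.univ.filter (fun p : Fin n × Fin n => p.1 < p.2), (1 - X p.1 * X p.2)

/-- The iterated Duflo–Serganova map
`dsₙ^{(k)} = ds_{n-2k+2} ∘ ⋯ ∘ ds_{n-2} ∘ dsₙ : Rₙ → R_{n-2k}`, with
`dsₙ^{(0)}` the identity. -/
def dsIter (n : ℕ) : (k : ℕ) → R n →+* R (n - 2 * k)
  | 0 => RingHom.id (R n)
  | k + 1 => (ds (n - 2 * k)).comp (dsIter n k)

/-!
For a symmetric Laurent polynomial `g` in `m` variables put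
`F_n(g)(S) = ∑ g(T) ∏ (1 - a b) / (a - b)`, where `T` runs over the `m`-element subsets of the set
`S` of the `n` variables, `a` over `T` and `b` over `S \ T`. Times the Vandermonde determinant this
is an antisymmetric Laurent polynomial, so `F_n(g)` is a symmetric Laurent polynomial.

Replace `S` by `S ∪ {t, t⁻¹}`. The terms in which `T` contains exactly one of `t`, `t⁻¹` vanish, and
in the others the factors involving `t` cancel, because
`(1 - a t) (1 - a t⁻¹) = (a - t) (a - t⁻¹)`. Hence if `g ∈ J m`, then `F_{n+2}(g) ∈ J (n + 2)` and
`ds F_{n+2}(g) = F_n(g) + F_n(ds g)`, the last summand being absent for `m < 2`. By induction on `m`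
every `F_n(g)` is in the image of `ds`; in particular `g = F_m(g)` is.

A Laurent polynomial is determined by its values at points with distinct coordinates in fields, as
the point whose coordinates are the variables is one of them; identities are checked there.
-/

universe u

section CharEval

variable {K L M N : Type*} [CommRing K] [CommRing L] [AddCommGroup M] [AddCommGroup N]

/-- Evaluation of the group algebra of `M` at a `K`-point of the torus with character lattice `M`,
the point being encoded as a homomorphism from `M` to the units of `K`. -/
def charEval (χ : Multiplicative M →* Kˣ) : AddMonoidAlgebra ℤ M →+* K :=
  (AddMonoidAlgebra.lift ℤ K M ((Units.coeHom K).comp χ)).toRingHom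

lemma charEval_single (χ : Multiplicative M →* Kˣ) (m : M) (c : ℤ) :
    charEval χ (AddMonoidAlgebra.single m c) = c * (χ (Multiplicative.ofAdd m) : K) :=
  (AddMonoidAlgebra.lift_single _ _ _).trans (zsmul_eq_mul _ _)

lemma charEval_mapDomain (χ : Multiplicative N →* Kˣ) (φ : M →+ N) (f : AddMonoidAlgebra ℤ M) :
    charEval χ (AddMonoidAlgebra.mapDomainRingHom ℤ φ f) =
      charEval (χ.comp φ.toMultiplicative) f := by
  suffices h : (charEval χ).comp (AddMonoidAlgebra.mapDomainRingHom ℤ φ) =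
      charEval (χ.comp φ.toMultiplicative) from DFunLike.congr_fun h f
  apply AddMonoidAlgebra.ringHom_ext <;>
    simp [charEval_single, AddMonoidAlgebra.mapDomain_single]

lemma map_charEval (φ : K →+* L) (χ : Multiplicative M →* Kˣ) (f : AddMonoidAlgebra ℤ M) :
    φ (charEval χ f) = charEval ((Units.map (φ : K →* L)).comp χ) f := by
  suffices h : φ.comp (charEval χ) = charEval ((Units.map (φ : K →* L)).comp χ) from
    DFunLike.congr_fun h f
  apply AddMonoidAlgebra.ringHom_ext <;> simp [charEval_single]

/-- The tautological point of the torus with character lattice `M`, whose coordinates are the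
monomials of the group algebra of `M`. -/
def genericChar (M : Type*) [AddCommGroup M] : Multiplicative M →* (AddMonoidAlgebra ℤ M)ˣ :=
  (AddMonoidAlgebra.of ℤ M).toHomUnits

lemma charEval_genericChar (f : AddMonoidAlgebra ℤ M) : charEval (genericChar M) f = f := by
  suffices h : charEval (genericChar M) = RingHom.id _ from DFunLike.congr_fun h f
  exact AddMonoidAlgebra.ringHom_ext' (RingHom.ext_int _ _) <| MonoidHom.ext fun m => by
    simp [charEval_single, genericChar]

lemma genericChar_injective (M : Type*) [AddCommGroup M] :
    Function.Injective (genericChar M) := fun _ _ h =>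
  AddMonoidAlgebra.of_injective (congrArg Units.val h)

lemma exists_charEval_injective (M : Type u) [AddCommGroup M] [IsDomain (AddMonoidAlgebra ℤ M)] :
    ∃ (K : Type u) (_ : Field K) (χ : Multiplicative M →* Kˣ),
      Function.Injective χ ∧ Function.Injective (charEval χ) := by
  let ι := algebraMap (AddMonoidAlgebra ℤ M) (FractionRing (AddMonoidAlgebra ℤ M))
  have hι : Function.Injective ι := IsFractionRing.injective _ _
  refine ⟨FractionRing (AddMonoidAlgebra ℤ M), inferInstance,
    (Units.map ι).comp (genericChar M), ?_, fun f g h => hι ?_⟩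
  · exact (Units.map_injective (f := ι.toMonoidHom) hι).comp (genericChar_injective M)
  · have hmap (f : AddMonoidAlgebra ℤ M) : charEval ((Units.map ι).comp (genericChar M)) f = ι f :=
      (map_charEval ι _ f).symm.trans (congrArg ι (charEval_genericChar f))
    rwa [hmap, hmap] at h

end CharEval

section EvalAt

variable {K L : Type*} [CommRing K] [CommRing L] {m n : ℕ}

/-- The homomorphism `ℤ ^ n → Kˣ` sending the `i`-th basis vector to `x i`. -/
def torusChar (x : Fin n → Kˣ) : Multiplicative (Fin n → ℤ) →* Kˣ where
  toFun a := ∏ i, x i ^ a.toAdd i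
  map_one' := by simp
  map_mul' a b := by simp [zpow_add, Finset.prod_mul_distrib]

lemma torusChar_apply (x : Fin n → Kˣ) (a : Multiplicative (Fin n → ℤ)) :
    torusChar x a = ∏ i, x i ^ a.toAdd i := rfl

lemma ofAdd_single_one_injective :
    Function.Injective fun i : Fin n => Multiplicative.ofAdd (Pi.single i (1 : ℤ) : Fin n → ℤ) :=
  Multiplicative.ofAdd.injective.comp fun i j h => by
    by_contra hij
    simpa [hij] using congrFun h i

lemma torusChar_single (x : Fin n → Kˣ) (i : Fin n) :
    torusChar x (Multiplicative.ofAdd (Pi.single i 1)) = x i := by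
  rw [torusChar_apply, Finset.prod_eq_single i] <;> simp +contextual

lemma torusChar_coordinates (χ : Multiplicative (Fin n → ℤ) →* Kˣ) :
    torusChar (fun i => χ (Multiplicative.ofAdd (Pi.single i 1))) = χ := by
  ext i
  simp [torusChar_single]

lemma map_comp_torusChar (φ : K →* L) (x : Fin n → Kˣ) :
    (Units.map φ).comp (torusChar x) = torusChar (Units.map φ ∘ x) := by
  ext a
  simp [torusChar_apply]

/-- Evaluation of a Laurent polynomial at a point with invertible coordinates. -/
def evalAt (x : Fin n → Kˣ) : R n →+* K := charEval (torusChar x)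

lemma evalAt_X (x : Fin n → Kˣ) (i : Fin n) : evalAt x (X i) = x i := by
  rw [evalAt, X, charEval_single, torusChar_single, Int.cast_one, one_mul]

lemma map_evalAt (φ : K →+* L) (x : Fin n → Kˣ) (f : R n) :
    φ (evalAt x f) = evalAt (Units.map (φ : K →* L) ∘ x) f := by
  rw [evalAt, map_charEval, map_comp_torusChar, evalAt]

lemma evalAt_permHom (x : Fin n → Kˣ) (w : Equiv.Perm (Fin n)) (f : R n) :
    evalAt x (permHom w f) = evalAt (x ∘ w) f := by
  rw [evalAt, permHom, charEval_mapDomain, evalAt]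
  refine congrArg (fun χ => charEval χ f) (MonoidHom.ext fun a => ?_)
  simp only [MonoidHom.comp_apply, torusChar_apply]
  rw [← Equiv.prod_comp w]
  simp [permExp]

/-- The point of `R n` whose coordinates are the variables. -/
def unitX (n : ℕ) (i : Fin n) : (R n)ˣ :=
  genericChar (Fin n → ℤ) (Multiplicative.ofAdd (Pi.single i 1))

lemma val_unitX (i : Fin n) : (unitX n i : R n) = X i := rfl

lemma unitX_injective (n : ℕ) : Function.Injective (unitX n) :=
  (genericChar_injective _).comp ofAdd_single_one_injective

lemma evalAt_unitX (f : R n) : evalAt (unitX n) f = f :=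
  (congrArg (fun χ => charEval χ f) (torusChar_coordinates _)).trans (charEval_genericChar f)

lemma exists_evalAt_injective (n : ℕ) :
    ∃ (K : Type) (_ : Field K) (x : Fin n → Kˣ),
      Function.Injective x ∧ Function.Injective (evalAt x) := by
  obtain ⟨K, _, χ, hχ, hinj⟩ := exists_charEval_injective (Fin n → ℤ)
  refine ⟨K, _, fun i => χ (Multiplicative.ofAdd (Pi.single i 1)),
    hχ.comp ofAdd_single_one_injective, ?_⟩
  rwa [evalAt, torusChar_coordinates]

lemma ext_of_evalAt_injective {f g : R n}
    (h : ∀ (K : Type) [Field K] (x : Fin n → Kˣ), Function.Injective x → evalAt x f = evalAt x g) :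
    f = g := by
  obtain ⟨K, _, x, hx, hinj⟩ := exists_evalAt_injective n
  exact hinj (h K x hx)

end EvalAt

section SymEval

open Finset

variable {K L : Type*} [CommRing K] [CommRing L] {m n : ℕ}

lemma exists_perm_of_map_univ_eq {ι α : Type*} [Fintype ι] {x y : ι → α}
    (h : univ.val.map x = univ.val.map y) : ∃ w : Equiv.Perm ι, y ∘ w = x := by
  classical
  have hfiber (c : α) : Nonempty ({i // x i = c} ≃ {i // y i = c}) := by
    rw [← Fintype.card_eq, Fintype.card_subtype, Fintype.card_subtype]
    simpa only [Finset.card_def, filter_val, Multiset.count_map, eq_comm] using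
      congrArg (Multiset.count c) h
  exact ⟨Equiv.ofFiberEquiv fun c => (hfiber c).some, funext (Equiv.ofFiberEquiv_map _)⟩

lemma exists_map_univ_eq_of_card_eq {α : Type*} {s : Multiset α} (hs : s.card = m) :
    ∃ x : Fin m → α, univ.val.map x = s := by
  obtain ⟨l, rfl⟩ : ∃ l : List α, (l : Multiset α) = s := ⟨s.toList, s.coe_toList⟩
  obtain rfl : l.length = m := hs
  exact ⟨l.get, by rw [Fin.univ_val_map, List.ofFn_get]⟩

lemma SymmP.evalAt_eq {g : R m} (hg : SymmP g) {x y : Fin m → Kˣ}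
    (h : univ.val.map x = univ.val.map y) : evalAt x g = evalAt y g := by
  obtain ⟨w, rfl⟩ := exists_perm_of_map_univ_eq h
  rw [← evalAt_permHom, hg w]

lemma symmP_of_evalAt_comp_perm {g : R m}
    (h : ∀ (K : Type) [Field K] (x : Fin m → Kˣ) (w : Equiv.Perm (Fin m)), Function.Injective x →
      evalAt (x ∘ w) g = evalAt x g) : SymmP g := fun w =>
  ext_of_evalAt_injective fun K _ x hx => (evalAt_permHom x w g).trans (h K x w hx)

open Classical in
/-- The value of a symmetric Laurent polynomial in `m` variables at a multiset of `m` units; the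
value at a multiset of any other cardinality is `0`. -/
def symEval (g : R m) (s : Multiset Kˣ) : K :=
  if h : ∃ x : Fin m → Kˣ, univ.val.map x = s then evalAt h.choose g else 0

lemma symEval_map_univ {g : R m} (hg : SymmP g) (x : Fin m → Kˣ) :
    symEval g (univ.val.map x) = evalAt x g := by
  have h : ∃ y : Fin m → Kˣ, univ.val.map y = univ.val.map x := ⟨x, rfl⟩
  rw [symEval, dif_pos h]
  exact hg.evalAt_eq h.choose_spec

lemma symEval_of_card_ne (g : R m) {s : Multiset Kˣ} (hs : s.card ≠ m) : symEval g s = 0 :=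
  dif_neg <| by
    rintro ⟨x, rfl⟩
    simp at hs

lemma map_symEval (φ : K →+* L) {g : R m} (hg : SymmP g) (s : Multiset Kˣ) :
    φ (symEval g s) = symEval g (s.map (Units.map φ)) := by
  by_cases hs : s.card = m
  · obtain ⟨x, rfl⟩ := exists_map_univ_eq_of_card_eq hs
    rw [symEval_map_univ hg, map_evalAt, Multiset.map_map]
    exact (symEval_map_univ hg _).symm
  · rw [symEval_of_card_ne g hs, symEval_of_card_ne g (by rwa [Multiset.card_map]), map_zero]

end SymEval

section AppendPair

open Finset

variable {α β : Type*} {n : ℕ}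

/-- The tuple `(x 0, …, x (n - 1), a, b)`. -/
def appendPair (x : Fin n → α) (a b : α) : Fin (n + 2) → α :=
  Fin.snoc (α := fun _ => α) (Fin.snoc (α := fun _ => α) x a) b

lemma comp_appendPair (φ : α → β) (x : Fin n → α) (a b : α) :
    φ ∘ appendPair x a b = appendPair (φ ∘ x) (φ a) (φ b) := by
  rw [appendPair, Fin.comp_snoc, Fin.comp_snoc, appendPair]

lemma map_univ_appendPair (x : Fin n → α) (a b : α) :
    univ.val.map (appendPair x a b) = a ::ₘ b ::ₘ univ.val.map x := by
  simp only [appendPair, Fin.univ_val_map, List.ofFn_succ', Fin.snoc_castSucc, Fin.snoc_last,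
    List.concat_eq_append, List.append_assoc, Multiset.cons_coe, Multiset.coe_eq_coe]
  exact List.perm_append_comm

lemma image_univ_appendPair [DecidableEq α] (x : Fin n → α) (a b : α) :
    univ.image (appendPair x a b) = insert a (insert b (univ.image x)) := by
  rw [image, map_univ_appendPair, Multiset.toFinset_cons, Multiset.toFinset_cons, image]

lemma appendPair_injective_iff {x : Fin n → α} {a b : α} :
    Function.Injective (appendPair x a b) ↔
      Function.Injective x ∧ a ∉ Set.range x ∧ b ∉ Set.range x ∧ b ≠ a := by
  simp only [appendPair, Fin.snoc_injective_iff, Fin.range_snoc, Set.mem_insert_iff, not_or]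
  tauto

lemma prod_appendPair {M : Type*} [CommMonoid M] (x : Fin n → α) (a b : α)
    (φ : α → Fin (n + 2) → M) :
    ∏ i, φ (appendPair x a b i) i = (∏ i : Fin n, φ (x i) i.castSucc.castSucc) *
      φ a (Fin.last n).castSucc * φ b (Fin.last (n + 1)) := by
  simp only [appendPair, Fin.prod_univ_castSucc, Fin.snoc_castSucc, Fin.snoc_last]

end AppendPair

section DufloSerganova

variable {K : Type*} [CommRing K] {n : ℕ}

/-- The homomorphism `ℤ ^ n × ℤ → Kˣ` sending the `i`-th basis vector of `ℤ ^ n` to `x i` and the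
generator of the last factor to `t`. -/
def torusCharProd (x : Fin n → Kˣ) (t : Kˣ) : Multiplicative ((Fin n → ℤ) × ℤ) →* Kˣ :=
  (torusChar x).comp (AddMonoidHom.fst _ _).toMultiplicative *
    (zpowersHom Kˣ t).comp (AddMonoidHom.snd _ _).toMultiplicative

lemma torusCharProd_coordinates (χ : Multiplicative ((Fin n → ℤ) × ℤ) →* Kˣ) :
    torusCharProd (fun i => χ (Multiplicative.ofAdd (Pi.single i 1, 0)))
      (χ (Multiplicative.ofAdd (0, 1))) = χ := by
  refine MonoidHom.ext fun a => ?_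
  have hfst : torusChar (fun i => χ (Multiplicative.ofAdd (Pi.single i 1, 0))) =
      χ.comp (AddMonoidHom.inl _ _).toMultiplicative :=
    torusChar_coordinates (χ.comp (AddMonoidHom.inl _ _).toMultiplicative)
  have ha : Multiplicative.ofAdd (a.toAdd.1, (0 : ℤ)) *
      Multiplicative.ofAdd ((0 : Fin n → ℤ), a.toAdd.2) = a := by
    rw [← ofAdd_add, Prod.mk_add_mk, add_zero, zero_add, Prod.mk.eta, ofAdd_toAdd]
  simp [torusCharProd, hfst, ← map_zpow, ← map_mul, ← ofAdd_zsmul, ha]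

/-- `ds (n + 2)` with its codomain written as `R n`. -/
def dsAddTwo (n : ℕ) : R (n + 2) →+* R n := ds (n + 2)

lemma evalAt_dsAddTwo (x : Fin n → Kˣ) (f : R (n + 2)) :
    evalAt x (dsAddTwo n f) = evalAt (appendPair x 1 1) f := by
  refine (charEval_mapDomain _ _ _).trans (congrArg (fun χ => charEval χ f) ?_)
  refine MonoidHom.ext fun a => ?_
  simp only [MonoidHom.comp_apply, torusChar_apply,
    prod_appendPair x 1 1 fun u i => u ^ a.toAdd i, one_zpow, mul_one]
  rfl

lemma charEval_torusCharProd_ev (x : Fin n → Kˣ) (t : Kˣ) (f : R (n + 2)) :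
    charEval (torusCharProd x t) (ev (n + 2) f) = evalAt (appendPair x t t⁻¹) f := by
  refine (charEval_mapDomain _ _ _).trans (congrArg (fun χ => charEval χ f) ?_)
  refine MonoidHom.ext fun a => ?_
  have hsnd : (evExp (n + 2) a.toAdd).2 =
      a.toAdd (Fin.last n).castSucc - a.toAdd (Fin.last (n + 1)) := by
    simp [evExp, Fin.castSucc, Fin.last]
  simp only [MonoidHom.comp_apply, torusCharProd, MonoidHom.mul_apply, torusChar_apply,
    prod_appendPair x t t⁻¹ fun u i => u ^ a.toAdd i, mul_assoc, inv_zpow', ← zpow_add,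
    ← sub_eq_add_neg, ← hsnd]
  rfl

lemma charEval_torusCharProd_inl (x : Fin n → Kˣ) (t : Kˣ) (p : R n) :
    charEval (torusCharProd x t)
      (AddMonoidAlgebra.mapDomainRingHom ℤ (AddMonoidHom.inl (Fin n → ℤ) ℤ) p) = evalAt x p := by
  refine (charEval_mapDomain _ _ _).trans (congrArg (fun χ => charEval χ p) ?_)
  refine MonoidHom.ext fun a => ?_
  simp [torusCharProd]

open AddMonoidAlgebra in
lemma dsAddTwo_eq_of_ev_eq {f : R (n + 2)} {p : R n}
    (h : ev (n + 2) f = mapDomainRingHom ℤ (AddMonoidHom.inl (Fin n → ℤ) ℤ) p) :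
    dsAddTwo n f = p := by
  rw [← evalAt_unitX (dsAddTwo n f), evalAt_dsAddTwo]
  nth_rw 2 [← inv_one]
  rw [← charEval_torusCharProd_ev, h, charEval_torusCharProd_inl, evalAt_unitX]

lemma evalAt_appendPair_of_mem_J {f : R (n + 2)} (hf : f ∈ J (n + 2)) (x : Fin n → Kˣ) (t : Kˣ) :
    evalAt (appendPair x t t⁻¹) f = evalAt x (dsAddTwo n f) := by
  obtain ⟨p, hp⟩ := hf.2 (Nat.le_add_left 2 n)
  rw [dsAddTwo_eq_of_ev_eq hp.symm, ← charEval_torusCharProd_ev, ← hp]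
  exact charEval_torusCharProd_inl x t p

lemma exists_charEval_torusCharProd_injective (n : ℕ) :
    ∃ (K : Type) (_ : Field K) (x : Fin n → Kˣ) (t : Kˣ),
      Function.Injective (appendPair x t t⁻¹) ∧
        Function.Injective (charEval (torusCharProd x t)) := by
  obtain ⟨K, _, χ, hχ, hinj⟩ := exists_charEval_injective ((Fin n → ℤ) × ℤ)
  refine ⟨K, _, _, _, ?_, by rwa [torusCharProd_coordinates χ]⟩
  have hbasis : Function.Injective
      (appendPair (fun i : Fin n => ((Pi.single i (1 : ℤ) : Fin n → ℤ), (0 : ℤ))) (0, 1) (0, -1)) :=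
    appendPair_injective_iff.mpr ⟨fun i j h => ofAdd_single_one_injective (congrArg Prod.fst h),
      by simp, by simp, by simp⟩
  have hneg : χ (Multiplicative.ofAdd (0, -1)) = (χ (Multiplicative.ofAdd (0, 1)))⁻¹ := by
    rw [← map_inv, ← ofAdd_neg, Prod.neg_mk, neg_zero]
  rw [← hneg]
  have hcoord := hχ.comp (Multiplicative.ofAdd.injective.comp hbasis)
  rwa [comp_appendPair, comp_appendPair] at hcoord

lemma mem_J_and_dsAddTwo_eq {f : R (n + 2)} (hf : SymmP f) {p : R n}
    (h : ∀ (K : Type) [Field K] (x : Fin n → Kˣ) (t : Kˣ),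
      Function.Injective (appendPair x t t⁻¹) → evalAt (appendPair x t t⁻¹) f = evalAt x p) :
    f ∈ J (n + 2) ∧ dsAddTwo n f = p := by
  obtain ⟨K, _, x, t, hxt, hinj⟩ := exists_charEval_torusCharProd_injective n
  have hev : ev (n + 2) f =
      AddMonoidAlgebra.mapDomainRingHom ℤ (AddMonoidHom.inl (Fin n → ℤ) ℤ) p := hinj <| by
    rw [charEval_torusCharProd_ev, charEval_torusCharProd_inl]
    exact h K x t hxt
  exact ⟨⟨hf, fun _ => ⟨p, hev.symm⟩⟩, dsAddTwo_eq_of_ev_eq hev⟩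

lemma sub_mem_J {f g : R n} (hf : f ∈ J n) (hg : g ∈ J n) : f - g ∈ J n := by
  refine ⟨fun w => by rw [map_sub, hf.1 w, hg.1 w], fun hn => ?_⟩
  obtain ⟨p, hp⟩ := hf.2 hn
  obtain ⟨q, hq⟩ := hg.2 hn
  exact ⟨p - q, by rw [map_sub, map_sub, hp, hq]⟩

lemma SymmP.dsAddTwo {f : R (n + 2)} (hf : SymmP f) : SymmP (dsAddTwo n f) :=
  symmP_of_evalAt_comp_perm fun K _ x w _ => by
    rw [evalAt_dsAddTwo, evalAt_dsAddTwo]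
    apply hf.evalAt_eq
    rw [map_univ_appendPair, map_univ_appendPair, ← Multiset.map_map,
      Multiset.map_univ_val_equiv]

lemma dsAddTwo_mem_J : ∀ {n : ℕ} {f : R (n + 2)}, f ∈ J (n + 2) → dsAddTwo n f ∈ J n
  | 0, _, hf | 1, _, hf => ⟨hf.1.dsAddTwo, fun h => absurd h (by norm_num)⟩
  | n + 2, f, hf => And.left <| mem_J_and_dsAddTwo_eq hf.1.dsAddTwo fun K _ x t _ => by
    have hcomm : evalAt (appendPair (appendPair x t t⁻¹) 1 1) f =
        evalAt (appendPair (appendPair x 1 1) t t⁻¹) f := hf.1.evalAt_eq <| by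
      simp only [map_univ_appendPair, ← Multiset.singleton_add]
      ac_rfl
    rw [evalAt_dsAddTwo, hcomm, evalAt_appendPair_of_mem_J hf, ← evalAt_dsAddTwo]

lemma symEval_cons_cons_inv {f : R (n + 2)} (hf : f ∈ J (n + 2)) (t : Kˣ) (s : Multiset Kˣ) :
    symEval f (t ::ₘ t⁻¹ ::ₘ s) = symEval (dsAddTwo n f) s := by
  by_cases hs : s.card = n
  · obtain ⟨x, rfl⟩ := exists_map_univ_eq_of_card_eq hs
    rw [← map_univ_appendPair, symEval_map_univ hf.1, symEval_map_univ hf.1.dsAddTwo,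
      evalAt_appendPair_of_mem_J hf]
  · rw [symEval_of_card_ne _ hs, symEval_of_card_ne]
    simpa using hs

end DufloSerganova

section Antisymmetric

open Finset

lemma prod_dvd_of_prime_of_pairwise_not_dvd {ι M : Type*} [CommMonoidWithZero M]
    {s : Finset ι} {p : ι → M} {a : M} (hp : ∀ i ∈ s, Prime (p i))
    (hs : (s : Set ι).Pairwise fun i j => ¬p i ∣ p j) (ha : ∀ i ∈ s, p i ∣ a) :
    ∏ i ∈ s, p i ∣ a := by
  classical
  induction s using Finset.induction_on with
  | empty => simp
  | insert i s hi ih =>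
    simp only [forall_mem_insert, coe_insert] at hp hs ha
    obtain ⟨c, rfl⟩ := ih hp.2 (hs.mono (Set.subset_insert _ _)) ha.2
    have hns : ¬p i ∣ ∏ j ∈ s, p j := by
      rw [hp.1.dvd_finsetProd_iff]
      rintro ⟨j, hj, hij⟩
      exact hs (Set.mem_insert _ _) (Set.mem_insert_of_mem _ hj) (by grind) hij
    rw [prod_insert hi, mul_comm]
    exact mul_dvd_mul_left _ ((hp.1.dvd_or_dvd ha.1).resolve_left hns)

variable {n : ℕ}

lemma X_injective (n : ℕ) : Function.Injective (X : Fin n → R n) := fun _ _ h =>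
  unitX_injective n (Units.ext h)

/-- The endomorphism of `R n` substituting `X a` for `X b`. -/
def identify (a b : Fin n) : R n →+* R n := evalAt (unitX n ∘ Function.update id b a)

lemma identify_X (a b i : Fin n) : identify a b (X i) = X (Function.update id b a i) :=
  evalAt_X _ i

lemma span_X_sub_X (a b : Fin n) : Ideal.span {X b - X a} = RingHom.ker (identify a b) := by
  refine le_antisymm ?_ fun f hf => ?_
  · rw [Ideal.span_singleton_le_iff_mem, RingHom.mem_ker, map_sub, identify_X, identify_X,
      Function.update_self, sub_eq_zero]
    exact congrArg X (by grind)
  · let I : Ideal (R n) := Ideal.span {X b - X a}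
    let π := Ideal.Quotient.mk I
    let y : Fin n → (R n ⧸ I)ˣ := Units.map (π : R n →* R n ⧸ I) ∘ unitX n
    have hy : y ∘ Function.update id b a = y := by
      have hab : π (X a) = π (X b) :=
        (Ideal.Quotient.eq.mpr (Ideal.mem_span_singleton_self _)).symm
      ext i
      obtain rfl | hi := eq_or_ne i b
      · simpa [y, val_unitX] using hab
      · simp [hi]
    have hπ : π f = 0 := calc
      π f = evalAt y f := by rw [← map_evalAt, evalAt_unitX]
      _ = evalAt (y ∘ Function.update id b a) f := by rw [hy]
      _ = π (identify a b f) := (map_evalAt π _ f).symm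
      _ = 0 := by rw [RingHom.mem_ker.mp hf, map_zero]
    exact Ideal.Quotient.eq_zero_iff_mem.mp hπ

lemma X_sub_X_dvd_iff {a b : Fin n} {f : R n} : X b - X a ∣ f ↔ identify a b f = 0 := by
  rw [← Ideal.mem_span_singleton, span_X_sub_X, RingHom.mem_ker]

lemma prime_X_sub_X {a b : Fin n} (hab : a ≠ b) : Prime (X b - X a : R n) := by
  rw [← Ideal.span_singleton_prime (sub_ne_zero.mpr ((X_injective n).ne hab.symm)), span_X_sub_X]
  exact RingHom.ker_isPrime _

lemma not_X_sub_X_dvd_X_sub_X {a b c d : Fin n} (hab : a < b) (hcd : c < d)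
    (hne : (a, b) ≠ (c, d)) : ¬(X b - X a : R n) ∣ X d - X c := by
  rw [X_sub_X_dvd_iff, map_sub, identify_X, identify_X, sub_eq_zero, (X_injective n).eq_iff]
  simp only [Function.update_apply, id]
  grind

lemma identify_eq_zero_of_permHom_swap {A : R n} {a b : Fin n}
    (hA : permHom (Equiv.swap a b) A = -A) : identify a b A = 0 := by
  have : CharZero (R n) := (evalAt (1 : Fin n → ℤˣ)).charZero
  have hswap : Function.update id b a ∘ Equiv.swap a b = Function.update id b a := by
    ext i
    grind
  have hneg : identify a b A = -identify a b A := by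
    rw [← map_neg, ← hA, identify, evalAt_permHom, Function.comp_assoc, hswap]
  exact self_eq_neg.mp hneg

lemma det_vandermonde_X_dvd {A : R n}
    (hA : ∀ a b : Fin n, a ≠ b → permHom (Equiv.swap a b) A = -A) :
    (Matrix.vandermonde (X : Fin n → R n)).det ∣ A := by
  rw [Matrix.det_vandermonde, prod_sigma']
  refine prod_dvd_of_prime_of_pairwise_not_dvd (fun p hp => ?_) (fun p hp q hq hpq => ?_)
    (fun p hp => ?_)
  · exact prime_X_sub_X (by simpa using hp : p.1 < p.2).ne
  · exact not_X_sub_X_dvd_X_sub_X (by simpa using hp) (by simpa using hq) (by grind)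
  · have hne : p.1 ≠ p.2 := (by simpa using hp : p.1 < p.2).ne
    exact X_sub_X_dvd_iff.mpr (identify_eq_zero_of_permHom_swap (hA _ _ hne))

lemma evalAt_det_vandermonde {K : Type*} [CommRing K] (x : Fin n → Kˣ) :
    evalAt x (Matrix.vandermonde (X : Fin n → R n)).det =
      (Matrix.vandermonde fun i => (x i : K)).det := by
  simp only [Matrix.det_vandermonde, map_prod, map_sub, evalAt_X]

end Antisymmetric

section LiftSum

open Finset

variable {K : Type*} [Field K] {m n : ℕ}

/-- The weight `(1 - a * b) / (a - b)` attached to a chosen unit `a` and an omitted unit `b`. -/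
def pairWeight (a b : Kˣ) : K := (1 - a * b) / (a - b)

lemma pairWeight_comm (a b : Kˣ) : pairWeight b a = -pairWeight a b := by
  rw [pairWeight, pairWeight, mul_comm, ← div_neg, neg_sub]

lemma pairWeight_eq_zero {a b : Kˣ} (hab : a * b = 1) : pairWeight a b = 0 := by
  rw [pairWeight, ← Units.val_mul, hab, Units.val_one, sub_self, zero_div]

lemma pairWeight_mul_pairWeight_inv_right {a t : Kˣ} (h : a ≠ t) (h' : a ≠ t⁻¹) :
    pairWeight a t * pairWeight a t⁻¹ = 1 := by
  have hsub : (a - t : K) ≠ 0 := sub_ne_zero.mpr (Units.val_injective.ne h)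
  have hsub' : (a * t - 1 : K) ≠ 0 := fun hat =>
    h' (eq_inv_of_mul_eq_one_left (Units.ext (sub_eq_zero.mp hat)))
  rw [pairWeight, pairWeight, Units.val_inv_eq_inv_val]
  field_simp
  ring

lemma pairWeight_mul_pairWeight_inv_left {b t : Kˣ} (h : b ≠ t) (h' : b ≠ t⁻¹) :
    pairWeight t b * pairWeight t⁻¹ b = 1 := by
  rw [pairWeight_comm b t, pairWeight_comm b t⁻¹, neg_mul_neg,
    pairWeight_mul_pairWeight_inv_right h h']

/-- The product of the pair weights between `T` and `U`. -/
def crossWeight (T U : Finset Kˣ) : K := ∏ a ∈ T, ∏ b ∈ U, pairWeight a b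

lemma crossWeight_eq_zero {T U : Finset Kˣ} {a b : Kˣ} (ha : a ∈ T) (hb : b ∈ U) (hab : a * b = 1) :
    crossWeight T U = 0 :=
  prod_eq_zero ha <| prod_eq_zero hb <| pairWeight_eq_zero hab

variable [DecidableEq K]

lemma crossWeight_insert_pair_right {T U : Finset Kˣ} {t : Kˣ} (ht : t ≠ t⁻¹) (hT : t ∉ T)
    (hT' : t⁻¹ ∉ T) (hU : t ∉ U) (hU' : t⁻¹ ∉ U) :
    crossWeight T (insert t (insert t⁻¹ U)) = crossWeight T U := by
  refine prod_congr rfl fun a ha => ?_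
  rw [prod_insert (by grind), prod_insert hU', ← mul_assoc,
    pairWeight_mul_pairWeight_inv_right (by grind) (by grind), one_mul]

lemma crossWeight_insert_pair_left {T U : Finset Kˣ} {t : Kˣ} (ht : t ≠ t⁻¹) (hT : t ∉ T)
    (hT' : t⁻¹ ∉ T) (hU : t ∉ U) (hU' : t⁻¹ ∉ U) :
    crossWeight (insert t (insert t⁻¹ T)) U = crossWeight T U := by
  rw [crossWeight, prod_insert (by grind), prod_insert hT', ← mul_assoc, ← prod_mul_distrib,
    prod_eq_one fun b hb => pairWeight_mul_pairWeight_inv_left (by grind) (by grind), one_mul,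
    crossWeight]

/-- The sum over the subsets `T` of `S` of the values of `g` at `T`, weighted by the product of
`(1 - a * b) / (a - b)` over `a ∈ T` and `b ∈ S \ T`. -/
def liftSum (g : R m) (S : Finset Kˣ) : K :=
  ∑ T ∈ S.powerset, symEval g T.val * crossWeight T (S \ T)

lemma liftSum_insert_pair (g : R m) {S : Finset Kˣ} {t : Kˣ} (ht : t ≠ t⁻¹) (hS : t ∉ S)
    (hS' : t⁻¹ ∉ S) :
    liftSum g (insert t (insert t⁻¹ S)) =
      liftSum g S + ∑ T ∈ S.powerset, symEval g (t ::ₘ t⁻¹ ::ₘ T.val) * crossWeight T (S \ T) := by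
  set S₂ := insert t (insert t⁻¹ S)
  have hnone {T} (hT : T ⊆ S) : crossWeight T (S₂ \ T) = crossWeight T (S \ T) := by
    have hsdiff : S₂ \ T = insert t (insert t⁻¹ (S \ T)) := by grind
    rw [hsdiff, crossWeight_insert_pair_right ht] <;> grind
  have hinv {T} (hT : T ⊆ S) : crossWeight (insert t⁻¹ T) (S₂ \ insert t⁻¹ T) = 0 :=
    crossWeight_eq_zero (mem_insert_self _ _) (by grind) (inv_mul_cancel t)
  have hself {T} (hT : T ⊆ S) : crossWeight (insert t T) (S₂ \ insert t T) = 0 :=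
    crossWeight_eq_zero (mem_insert_self _ _) (by grind) (mul_inv_cancel t)
  have hboth {T} (hT : T ⊆ S) : crossWeight (insert t (insert t⁻¹ T))
      (S₂ \ insert t (insert t⁻¹ T)) = crossWeight T (S \ T) := by
    have hsdiff : S₂ \ insert t (insert t⁻¹ T) = S \ T := by grind
    rw [hsdiff, crossWeight_insert_pair_left ht] <;> grind
  have hval {T} (hT : T ⊆ S) : (insert t (insert t⁻¹ T)).val = t ::ₘ t⁻¹ ::ₘ T.val := by
    rw [insert_val_of_notMem, insert_val_of_notMem] <;> grind
  rw [liftSum, sum_powerset_insert (by grind), sum_powerset_insert hS', sum_powerset_insert hS',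
    ← sum_add_distrib, ← sum_add_distrib, ← sum_add_distrib, liftSum, ← sum_add_distrib]
  refine sum_congr rfl fun T hT => ?_
  rw [mem_powerset] at hT
  rw [hnone hT, hinv hT, hself hT, hboth hT, hval hT, mul_zero, mul_zero, add_zero, zero_add]

lemma liftSum_insert_pair_of_lt_two (g : R m) (hm : m < 2) {S : Finset Kˣ} {t : Kˣ} (ht : t ≠ t⁻¹)
    (hS : t ∉ S) (hS' : t⁻¹ ∉ S) : liftSum g (insert t (insert t⁻¹ S)) = liftSum g S := by
  rw [liftSum_insert_pair g ht hS hS', sum_eq_zero, add_zero]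
  intro T _
  rw [symEval_of_card_ne, zero_mul]
  simp only [Multiset.card_cons]
  lia

lemma liftSum_insert_pair_of_mem_J {g : R (m + 2)} (hg : g ∈ J (m + 2)) {S : Finset Kˣ} {t : Kˣ}
    (ht : t ≠ t⁻¹) (hS : t ∉ S) (hS' : t⁻¹ ∉ S) :
    liftSum g (insert t (insert t⁻¹ S)) = liftSum g S + liftSum (dsAddTwo m g) S := by
  simp only [liftSum_insert_pair g ht hS hS', symEval_cons_cons_inv hg, ← liftSum.eq_def]

lemma liftSum_image_univ (g : R m) {x : Fin n → Kˣ} (hx : Function.Injective x) :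
    liftSum g (univ.image x) =
      ∑ s : Finset (Fin n), symEval g (s.val.map x) *
        ∏ i ∈ s, ∏ j ∈ sᶜ, pairWeight (x i) (x j) := by
  rw [liftSum, powerset_image, powerset_univ, sum_image (image_injective hx).injOn]
  refine sum_congr rfl fun s _ => ?_
  rw [← image_sdiff _ _ hx, image_val_of_injOn hx.injOn, crossWeight, prod_image hx.injOn,
    compl_eq_univ_sdiff]
  simp only [prod_image hx.injOn]

end LiftSum

section LiftNumerator

open Finset

variable {m n : ℕ}

/-- The factor at the pair `(i, j)` of the Vandermonde product of `v` multiplied by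
`∏ (1 - v a * v b) / (v a - v b)` over `a ∈ s` and `b ∉ s`. -/
def crossFactor {A : Type*} [CommRing A] (s : Finset (Fin n)) (v : Fin n → A) (i j : Fin n) : A :=
  if i ∈ s ∧ j ∉ s then v i * v j - 1
  else if j ∈ s ∧ i ∉ s then 1 - v i * v j
  else v j - v i

lemma prod_prod_compl_eq_prod_prod_off_diag {M : Type*} [CommMonoid M] (s : Finset (Fin n))
    (w : Fin n → Fin n → M) :
    ∏ i ∈ s, ∏ j ∈ sᶜ, w i j = ∏ i, ∏ j ∈ {i}ᶜ, if i ∈ s ∧ j ∉ s then w i j else 1 := by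
  have hrow (i : Fin n) : (∏ j ∈ {i}ᶜ, if i ∈ s ∧ j ∉ s then w i j else 1) =
      if i ∈ s then ∏ j ∈ sᶜ, w i j else 1 := by
    split_ifs with hi
    · simp only [hi, true_and, ← mem_compl]
      rw [prod_ite_mem, inter_eq_right.mpr (by simpa using hi)]
    · simp [hi]
  simp only [hrow, prod_ite_mem, univ_inter]

variable {K : Type*} [Field K]

lemma sub_mul_ite_pairWeight (s : Finset (Fin n)) {x : Fin n → Kˣ} {i j : Fin n}
    (hij : x i ≠ x j) :
    (x j - x i : K) * ((if i ∈ s ∧ j ∉ s then pairWeight (x i) (x j) else 1) *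
      if j ∈ s ∧ i ∉ s then pairWeight (x j) (x i) else 1) =
        crossFactor s (fun k => (x k : K)) i j := by
  have hsub : (x j - x i : K) ≠ 0 := sub_ne_zero.mpr (Units.val_injective.ne hij.symm)
  have hmul_ji : (x j - x i : K) * pairWeight (x j) (x i) = 1 - x i * x j := by
    rw [pairWeight, mul_div_cancel₀ _ hsub, mul_comm (x j : K)]
  have hmul_ij : (x j - x i : K) * pairWeight (x i) (x j) = x i * x j - 1 := by
    rw [pairWeight_comm (x j), mul_neg, hmul_ji, neg_sub]
  grind [crossFactor]

lemma det_vandermonde_mul_prod_pairWeight (s : Finset (Fin n)) {x : Fin n → Kˣ}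
    (hx : Function.Injective x) :
    (Matrix.vandermonde fun i => (x i : K)).det * ∏ i ∈ s, ∏ j ∈ sᶜ, pairWeight (x i) (x j) =
      ∏ i, ∏ j ∈ Ioi i, crossFactor s (fun i => (x i : K)) i j := by
  rw [prod_prod_compl_eq_prod_prod_off_diag, ← prod_prod_Ioi_mul_eq_prod_prod_off_diag,
    Matrix.det_vandermonde, ← prod_mul_distrib]
  refine prod_congr rfl fun i _ => ?_
  rw [← prod_mul_distrib]
  exact prod_congr rfl fun j hj => sub_mul_ite_pairWeight s (hx.ne (mem_Ioi.mp hj).ne)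

/-- The numerator of the rational function `x ↦ liftSum g {x 0, …, x (n - 1)}` over the Vandermonde
determinant. -/
def liftNumerator (g : R m) (n : ℕ) : R n :=
  ∑ s : Finset (Fin n), symEval g (s.val.map (unitX n)) * ∏ i, ∏ j ∈ Ioi i, crossFactor s X i j

variable [DecidableEq K]

lemma evalAt_liftNumerator {g : R m} (hg : SymmP g) {x : Fin n → Kˣ}
    (hx : Function.Injective x) :
    evalAt x (liftNumerator g n) =
      (Matrix.vandermonde fun i => (x i : K)).det * liftSum g (univ.image x) := by
  have hsymEval (s : Finset (Fin n)) :
      evalAt x (symEval g (s.val.map (unitX n))) = symEval g (s.val.map x) := by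
    rw [map_symEval _ hg, Multiset.map_map]
    congr 2
    ext i
    exact evalAt_X x i
  have hfactor (s : Finset (Fin n)) (i j : Fin n) :
      evalAt x (crossFactor s X i j) = crossFactor s (fun i => (x i : K)) i j := by
    unfold crossFactor
    split_ifs <;> simp [evalAt_X]
  simp only [liftNumerator, map_sum, map_mul, map_prod, hsymEval, hfactor,
    ← det_vandermonde_mul_prod_pairWeight _ hx, liftSum_image_univ g hx, mul_sum, mul_left_comm]

lemma permHom_swap_liftNumerator {g : R m} (hg : SymmP g) {a b : Fin n} (hab : a ≠ b) :
    permHom (Equiv.swap a b) (liftNumerator g n) = -liftNumerator g n := by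
  classical
  refine ext_of_evalAt_injective fun K _ x hx => ?_
  have himage : univ.image (x ∘ Equiv.swap a b) = univ.image x := by
    rw [← image_image, image_univ_equiv]
  have hdet : (Matrix.vandermonde fun i => ((x ∘ Equiv.swap a b) i : K)).det =
      -(Matrix.vandermonde fun i => (x i : K)).det := by
    refine (Matrix.det_permute (Equiv.swap a b) (Matrix.vandermonde fun i => (x i : K))).trans ?_
    rw [Equiv.Perm.sign_swap hab, Units.val_neg, Units.val_one, Int.cast_neg, Int.cast_one,
      neg_one_mul]
  rw [evalAt_permHom, evalAt_liftNumerator hg (hx.comp (Equiv.injective _)), himage, hdet,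
    map_neg, evalAt_liftNumerator hg hx, neg_mul]

end LiftNumerator

section IsLift

open Finset

variable {m n : ℕ}

/-- The Laurent polynomial `f` in `n` variables represents the symmetric function
`S ↦ liftSum g S` on sets of `n` units. -/
def IsLift (g : R m) (f : R n) : Prop :=
  ∀ (K : Type) [Field K] [DecidableEq K] (x : Fin n → Kˣ), Function.Injective x →
    evalAt x f = liftSum g (univ.image x)

lemma exists_isLift {g : R m} (hg : SymmP g) (n : ℕ) : ∃ f : R n, IsLift g f := by
  obtain ⟨f, hf⟩ := det_vandermonde_X_dvd fun a b hab => permHom_swap_liftNumerator (n := n) hg hab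
  refine ⟨f, fun K _ _ x hx => ?_⟩
  have hdet : (Matrix.vandermonde fun i => (x i : K)).det ≠ 0 :=
    Matrix.det_vandermonde_ne_zero_iff.mpr (Units.val_injective.comp hx)
  apply mul_left_cancel₀ hdet
  rw [← evalAt_liftNumerator hg hx, hf, map_mul, evalAt_det_vandermonde]

lemma isLift_self {g : R m} (hg : SymmP g) : IsLift g g := fun K _ _ x hx => by
  rw [liftSum_image_univ g hx, sum_eq_single univ]
  · rw [symEval_map_univ hg, compl_univ]
    simp
  · intro s _ hs
    have hcard : (s.val.map x).card ≠ m := fun h =>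
      hs ((card_eq_iff_eq_univ s).mp (by simpa using h))
    rw [symEval_of_card_ne g hcard, zero_mul]
  · simp

lemma IsLift.symmP {g : R m} {f : R n} (hf : IsLift g f) : SymmP f :=
  symmP_of_evalAt_comp_perm fun K _ x w hx => by
    classical
    rw [hf K _ (hx.comp w.injective), hf K x hx, ← image_image, image_univ_equiv]

lemma IsLift.mem_J_and_dsAddTwo_eq_of_lt_two {g : R m} {f : R (n + 2)} {f₀ : R n} (hm : m < 2)
    (hf : IsLift g f) (hf₀ : IsLift g f₀) : f ∈ J (n + 2) ∧ dsAddTwo n f = f₀ := by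
  classical
  refine mem_J_and_dsAddTwo_eq hf.symmP fun K _ x t hxt => ?_
  obtain ⟨hx, ht, ht', hne⟩ := appendPair_injective_iff.mp hxt
  rw [hf K _ hxt, hf₀ K x hx, image_univ_appendPair,
    liftSum_insert_pair_of_lt_two g hm hne.symm (by simpa using ht) (by simpa using ht')]

lemma IsLift.mem_J_and_dsAddTwo_eq_add {g : R (m + 2)} {f : R (n + 2)} {f₀ f₁ : R n}
    (hg : g ∈ J (m + 2)) (hf : IsLift g f) (hf₀ : IsLift g f₀) (hf₁ : IsLift (dsAddTwo m g) f₁) :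
    f ∈ J (n + 2) ∧ dsAddTwo n f = f₀ + f₁ := by
  classical
  refine mem_J_and_dsAddTwo_eq hf.symmP fun K _ x t hxt => ?_
  obtain ⟨hx, ht, ht', hne⟩ := appendPair_injective_iff.mp hxt
  rw [hf K _ hxt, map_add, hf₀ K x hx, hf₁ K x hx, image_univ_appendPair,
    liftSum_insert_pair_of_mem_J hg hne.symm (by simpa using ht) (by simpa using ht')]

lemma exists_dsAddTwo_eq_of_isLift : ∀ {m n : ℕ} {g : R m} {f : R n}, g ∈ J m → IsLift g f →
    ∃ F ∈ J (n + 2), dsAddTwo n F = f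
  | 0, n, g, f, hg, hf | 1, n, g, f, hg, hf => by
    obtain ⟨F, hF⟩ := exists_isLift hg.1 (n + 2)
    obtain ⟨hFJ, hds⟩ := IsLift.mem_J_and_dsAddTwo_eq_of_lt_two (by norm_num) hF hf
    exact ⟨F, hFJ, hds⟩
  | m + 2, n, g, f, hg, hf => by
    obtain ⟨F, hF⟩ := exists_isLift hg.1 (n + 2)
    obtain ⟨f₁, hf₁⟩ := exists_isLift hg.1.dsAddTwo n
    obtain ⟨hFJ, hds⟩ := IsLift.mem_J_and_dsAddTwo_eq_add hg hF hf hf₁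
    obtain ⟨F₁, hF₁J, hds₁⟩ := exists_dsAddTwo_eq_of_isLift (dsAddTwo_mem_J hg) hf₁
    exact ⟨F - F₁, sub_mem_J hFJ hF₁J, by rw [map_sub, hds, hds₁, add_sub_cancel_right]⟩

lemma exists_ds_eq {N : ℕ} (hN : 2 ≤ N) {g : R (N - 2)} (hg : g ∈ J (N - 2)) :
    ∃ f ∈ J N, ds N f = g := by
  obtain ⟨n, rfl⟩ := Nat.exists_eq_add_of_le' hN
  exact exists_dsAddTwo_eq_of_isLift hg (isLift_self hg.1)

end IsLift

/-- For all `n, k` with `0 ≤ 2k ≤ n`, the iterated map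
`dsₙ^{(k)} : Jₙ → J_{n-2k}` is surjective. -/
theorem dsIter_surjective (n k : ℕ) (hkn : 2 * k ≤ n) :
    ∀ g ∈ J (n - 2 * k), ∃ f ∈ J n, dsIter n k f = g := by
  induction k with
  | zero => exact fun g hg => ⟨g, hg, rfl⟩
  | succ k ih =>
    intro g hg
    obtain ⟨h, hh, hds⟩ := exists_ds_eq (N := n - 2 * k) (by lia) hg
    obtain ⟨f, hf, rfl⟩ := ih (by lia) h hh
    exact ⟨f, hf, hds⟩

end
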